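/- For every hypergraph G and every hierarchy decomposition T of G, the width of T is at least the hierarchy width of G: w(T) ≥ hw(G). -/

import Mathlib

/-- Connectivity relation between hyperedges within the edge set `E` of a hypergraph whose
hyperedges have vertex sets given by `dep`. -/
def EdgeConn {α ι : Type*} (dep : ι → Finset α) (E : Finset ι) : ι → ι → Prop :=
  Relation.ReflTransGen fun a b => a ∈ E ∧ b ∈ E ∧ ∃ v, v ∈ dep a ∧ v ∈ dep b

open Classical in
/-- Hierarchy width of the hypergraph with hyperedges `E`, where hyperedge `e` consists of
the vertices `dep e`: `0` if there are no hyperedges; `1 +` the minimum over single-edge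
removals for a connected hypergraph; the maximum over connected components otherwise. -/
noncomputable def hw {α ι : Type*} [DecidableEq ι] (dep : ι → Finset α) (E : Finset ι) : ℕ :=
  E.sup fun e =>
    1 + ((E.filter fun f => EdgeConn dep E e f).attach.inf fun f =>
      ((hw dep ((E.filter fun f => EdgeConn dep E e f).erase f.1) : ℕ∞))).toNat
termination_by E.card
decreasing_by
  exact lt_of_lt_of_le (Finset.card_erase_lt_of_mem f.2)
    (Finset.card_le_card (Finset.filter_subset _ _))

/-- A hierarchy decomposition of the hypergraph with hyperedges `E` (hyperedge `e` has
vertex set `dep e`): a rooted tree whose nodes `v` are labeled with sets `χ v` of hyperedges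
such that (1) every hyperedge occurs in some label, (2) the nodes whose labels contain a
given hyperedge are connected along tree paths, (3) any two intersecting hyperedges occur
together in some label, and (4) the label of a parent is contained in the label of each of
its children (a node `u` is the parent of `v` if they are adjacent and `u` lies on the
unique path from `v` to the root). -/
structure HierDecomp {α ι : Type*} (dep : ι → Finset α) (E : Finset ι) where
  τ : Type
  fin : Fintype τ
  T : SimpleGraph τ
  tree : T.IsTree
  root : τ
  χ : τ → Finset ι
  sub : ∀ v, χ v ⊆ E
  cover : ∀ e ∈ E, ∃ v, e ∈ χ v
  pathconn : ∀ e : ι, ∀ u v : τ, e ∈ χ u → e ∈ χ v →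
    ∀ p : T.Walk u v, p.IsPath → ∀ w ∈ p.support, e ∈ χ w
  meet : ∀ e ∈ E, ∀ f ∈ E, (∃ a, a ∈ dep e ∧ a ∈ dep f) → ∃ v, e ∈ χ v ∧ f ∈ χ v
  parentMono : ∀ u v : τ, T.Adj u v →
    (∀ p : T.Walk v root, p.IsPath → u ∈ p.support) → χ u ⊆ χ v

/-- The width of a hierarchy decomposition: the size of its largest label. -/
noncomputable def HierDecomp.width {α ι : Type*} {dep : ι → Finset α} {E : Finset ι}
    (D : HierDecomp dep E) : ℕ :=
  letI := D.fin
  Finset.univ.sup fun v => (D.χ v).card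

/-!
The set of tree nodes whose label contains a hyperedge `e` is connected and closed under
descendants, so it consists of all descendants of a single node, the top of `e`. Intersecting
hyperedges share a label, and the ancestors of a node form a chain, so their tops are comparable.
In a connected set of hyperedges, a top with no other top as a proper ancestor is therefore an
ancestor of all of them. Every label meeting the set contains the corresponding hyperedge, so
removing it lowers the largest number of members of the set in one label.
-/

section ForestOrder

variable {τ : Type*} [Preorder τ]

lemma le_of_minimalFor_of_reflTransGen {ι : Type*} (hτ : ∀ v : τ, IsChain (· ≤ ·) (Set.Iic v))
    {t : ι → τ} {R : ι → ι → Prop} (hR : ∀ a b, R a b → t a ≤ t b ∨ t b ≤ t a) {m : ι}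
    (hm : MinimalFor (Relation.ReflTransGen R m) t m) {x : ι} (hx : Relation.ReflTransGen R m x) :
    t m ≤ t x := by
  induction hx with
  | refl => exact le_rfl
  | @tail b c hmb hbc hle =>
    rcases hR b c hbc with hbc_le | hcb_le
    · exact hle.trans hbc_le
    · -- `t m` and `t c` are both below `t b`, hence comparable.
      exact ((hτ (t b)).total hle hcb_le).elim id (hm.2 (hmb.tail hbc))

lemma exists_isLeast_of_induce_connected (hτ : ∀ v : τ, IsChain (· ≤ ·) (Set.Iic v))
    {G : SimpleGraph τ} (hG : ∀ u v, G.Adj u v → u ≤ v ∨ v ≤ u) {S : Set τ} (hfin : S.Finite)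
    (hconn : (G.induce S).Connected) : ∃ t, IsLeast S t := by
  obtain ⟨t, ht⟩ := hfin.exists_minimal (Set.nonempty_coe_sort.1 hconn.nonempty)
  have hreach (v : S) : Relation.ReflTransGen (G.induce S).Adj ⟨t, ht.prop⟩ v :=
    (SimpleGraph.reachable_iff_reflTransGen _ _).1 (hconn.preconnected _ v)
  refine ⟨t, ht.prop, fun v hv => ?_⟩
  exact le_of_minimalFor_of_reflTransGen (t := Subtype.val) hτ (fun a b hab => hG a b hab)
    ⟨.refl, fun w _ => ht.2 w.2⟩ (hreach ⟨v, hv⟩)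

lemma card_filter_erase_lt_of_forall_le {ι : Type*} [DecidableEq ι] [DecidableLE τ] {t : ι → τ}
    {C : Finset ι} {m : ι} (hm : m ∈ C) (hle : ∀ f ∈ C, t m ≤ t f) {n : ℕ}
    (hn : ∀ v, (C.filter (t · ≤ v)).card ≤ n) (v : τ) :
    ((C.erase m).filter (t · ≤ v)).card < n := by
  by_cases hv : t m ≤ v
  · rw [Finset.filter_erase]
    exact (Finset.card_erase_lt_of_mem (Finset.mem_filter.2 ⟨hm, hv⟩)).trans_le (hn v)
  · have hempty : (C.erase m).filter (t · ≤ v) = ∅ :=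
      Finset.filter_eq_empty_iff.2 fun f hf hfv =>
        hv ((hle f (Finset.mem_of_mem_erase hf)).trans hfv)
    rw [hempty, Finset.card_empty]
    exact (Finset.card_pos.2 ⟨m, Finset.mem_filter.2 ⟨hm, le_refl (t m)⟩⟩).trans_le (hn (t m))

end ForestOrder

section HierarchyWidth

variable {α ι : Type*} {dep : ι → Finset α} {E : Finset ι}

lemma EdgeConn.symm {e f : ι} (h : EdgeConn dep E e f) : EdgeConn dep E f e :=
  (@Relation.ReflTransGen.stdSymm _ _
    ⟨fun _ _ ⟨ha, hb, v, hva, hvb⟩ => ⟨hb, ha, v, hvb, hva⟩⟩).symm _ _ h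

lemma EdgeConn.mem {e f : ι} (h : EdgeConn dep E e f) (he : e ∈ E) : f ∈ E := by
  induction h with
  | refl => exact he
  | tail _ hstep => exact hstep.2.1

open Classical in
variable (dep E) in
/-- The connected component of the hyperedge `e` in the hypergraph with hyperedges `E`, as a set of
hyperedges. It is written as in the definition of `hw`, so that unfolding `hw` produces it. -/
noncomputable def edgeComponent (e : ι) : Finset ι :=
  E.filter fun f => EdgeConn dep E e f

lemma edgeComponent_subset (e : ι) : edgeComponent dep E e ⊆ E := by
  classical exact Finset.filter_subset _ _

lemma mem_edgeComponent {e f : ι} (he : e ∈ E) :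
    f ∈ edgeComponent dep E e ↔ EdgeConn dep E e f := by
  classical exact Finset.mem_filter.trans <| and_iff_right_of_imp fun h => h.mem he

lemma mem_edgeComponent_iff_of_mem {e f m : ι} (he : e ∈ E) (hm : m ∈ edgeComponent dep E e) :
    f ∈ edgeComponent dep E e ↔ EdgeConn dep E m f := by
  rw [mem_edgeComponent he] at hm ⊢
  exact ⟨hm.symm.trans, hm.trans⟩

lemma hw_le_of_forall_exists_erase [DecidableEq ι] {n : ℕ}
    (h : ∀ e ∈ E, ∃ m ∈ edgeComponent dep E e, hw dep ((edgeComponent dep E e).erase m) < n) :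
    hw dep E ≤ n := by
  rw [hw]
  refine Finset.sup_le fun e he => ?_
  obtain ⟨m, hm, hlt⟩ := h e he
  rw [add_comm]
  refine Nat.succ_le_of_lt (lt_of_le_of_lt (ENat.toNat_le_of_le_natCast ?_) hlt)
  exact Finset.inf_le (Finset.mem_attach _ ⟨m, hm⟩)

lemma exists_mem_edgeComponent_forall_le {τ : Type*} [Preorder τ]
    (hτ : ∀ v : τ, IsChain (· ≤ ·) (Set.Iic v)) {t : ι → τ}
    (hcomp : ∀ e ∈ E, ∀ f ∈ E, (∃ a, a ∈ dep e ∧ a ∈ dep f) → t e ≤ t f ∨ t f ≤ t e)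
    {e : ι} (he : e ∈ E) :
    ∃ m ∈ edgeComponent dep E e, ∀ f ∈ edgeComponent dep E e, t m ≤ t f := by
  obtain ⟨m, hm, hmin⟩ := (edgeComponent dep E e).exists_minimalFor t
    ⟨e, (mem_edgeComponent he).2 .refl⟩
  have hmem (f : ι) := mem_edgeComponent_iff_of_mem (f := f) he hm
  have hminimal : MinimalFor (EdgeConn dep E m) t m :=
    ⟨.refl, fun f hf => hmin ((hmem f).2 hf)⟩
  exact ⟨m, hm, fun f hf => le_of_minimalFor_of_reflTransGen hτ
    (fun a b ⟨ha, hb, hab⟩ => hcomp a ha b hb hab) hminimal ((hmem f).1 hf)⟩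

theorem hw_le_of_forall_card_filter_le [DecidableEq ι] {τ : Type*} [Preorder τ] [DecidableLE τ]
    (hτ : ∀ v : τ, IsChain (· ≤ ·) (Set.Iic v)) {t : ι → τ}
    (hcomp : ∀ e ∈ E, ∀ f ∈ E, (∃ a, a ∈ dep e ∧ a ∈ dep f) → t e ≤ t f ∨ t f ≤ t e)
    {n : ℕ} (hn : ∀ v, (E.filter (t · ≤ v)).card ≤ n) : hw dep E ≤ n := by
  induction E using Finset.strongInduction generalizing n with
  | H E ih =>
    refine hw_le_of_forall_exists_erase fun e he => ?_
    obtain ⟨m, hm, hle⟩ := exists_mem_edgeComponent_forall_le hτ hcomp he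
    have hCE := edgeComponent_subset (dep := dep) (E := E) e
    have hlt := card_filter_erase_lt_of_forall_le hm hle fun v =>
      (Finset.card_le_card (Finset.filter_subset_filter _ hCE)).trans (hn v)
    have hssub : (edgeComponent dep E e).erase m ⊂ E := (Finset.erase_ssubset hm).trans_subset hCE
    have hpred : hw dep ((edgeComponent dep E e).erase m) ≤ n - 1 :=
      ih _ hssub (fun a ha b hb => hcomp a (hssub.subset ha) b (hssub.subset hb))
        fun v => Nat.le_sub_one_of_lt (hlt v)
    exact ⟨m, hm, Nat.lt_of_le_sub_one (Nat.zero_lt_of_lt (hlt (t m))) hpred⟩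

end HierarchyWidth

section Ancestor

variable {V : Type*} {G : SimpleGraph V} {r u v w : V}

/-- In a tree `G` with root `r`, the node `u` is an ancestor of `v`, or `v` itself. Quantifying over
all paths matches the condition in `HierDecomp.parentMono`. -/
def IsAncestor (G : SimpleGraph V) (r u v : V) : Prop :=
  ∀ p : G.Walk v r, p.IsPath → u ∈ p.support

lemma IsAncestor.refl (G : SimpleGraph V) (r v : V) : IsAncestor G r v v :=
  fun p _ => p.start_mem_support

lemma IsAncestor.trans (huv : IsAncestor G r u v) (hvw : IsAncestor G r v w) :
    IsAncestor G r u w := by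
  classical
  intro p hp
  have hv := hvw p hp
  exact p.support_dropUntil_subset_support hv (huv _ (hp.dropUntil hv))

variable (G r) in
/-- The ancestor relation as a preorder on the nodes, with the root at the bottom. -/
abbrev ancestorPreorder : Preorder V where
  le := IsAncestor G r
  le_refl := IsAncestor.refl G r
  le_trans _ _ _ := IsAncestor.trans

lemma isAncestor_of_mem_support (hG : G.IsAcyclic) {p : G.Walk v r} (hp : p.IsPath)
    (hu : u ∈ p.support) : IsAncestor G r u v := by
  intro q hq
  have hpq : p = q := congrArg Subtype.val ((hG.subsingleton_path v r).elim ⟨p, hp⟩ ⟨q, hq⟩)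
  exact hpq ▸ hu

lemma isAncestor_or_isAncestor_of_mem_support (hG : G.IsAcyclic) {p : G.Walk w r} (hp : p.IsPath)
    (hu : u ∈ p.support) (hv : v ∈ p.support) : IsAncestor G r u v ∨ IsAncestor G r v u := by
  induction p with
  | nil =>
    rw [SimpleGraph.Walk.mem_support_nil_iff] at hu hv
    subst hu hv
    exact .inl (.refl _ _ _)
  | cons h q ih =>
    rcases List.mem_cons.1 hu with rfl | hu'
    · exact .inr (isAncestor_of_mem_support hG hp hv)
    rcases List.mem_cons.1 hv with rfl | hv'
    · exact .inl (isAncestor_of_mem_support hG hp hu)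
    exact ih hp.of_cons hu' hv'

lemma IsAncestor.total (hG : G.IsTree) (hu : IsAncestor G r u w) (hv : IsAncestor G r v w) :
    IsAncestor G r u v ∨ IsAncestor G r v u := by
  obtain ⟨p, hp⟩ := hG.connected.exists_isPath w r
  exact isAncestor_or_isAncestor_of_mem_support hG.isAcyclic hp (hu p hp) (hv p hp)

lemma isAncestor_or_isAncestor_of_adj (hG : G.IsTree) (huv : G.Adj u v) :
    IsAncestor G r u v ∨ IsAncestor G r v u := by
  obtain ⟨p, hp⟩ := hG.connected.exists_isPath u r
  by_cases hv : v ∈ p.support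
  · exact .inr (isAncestor_of_mem_support hG.isAcyclic hp hv)
  · exact .inl <| isAncestor_of_mem_support hG.isAcyclic (hp.cons (h := huv.symm) hv)
      (List.mem_cons_of_mem _ p.start_mem_support)

lemma IsAncestor.apply_le_apply {β : Type*} [Preorder β] (hG : G.IsTree) {f : V → β}
    (hf : ∀ u v, G.Adj u v → IsAncestor G r u v → f u ≤ f v) (huv : IsAncestor G r u v) :
    f u ≤ f v := by
  obtain ⟨p, hp⟩ := hG.connected.exists_isPath v r
  have hu := huv p hp
  clear huv
  induction p with
  | nil => exact (congrArg f (SimpleGraph.Walk.mem_support_nil_iff.1 hu)).le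
  | @cons v parent _ hadj q ih =>
    rcases List.mem_cons.1 hu with rfl | hu'
    · exact le_rfl
    · have hparent : IsAncestor G _ parent v := isAncestor_of_mem_support hG.isAcyclic hp
        (List.mem_cons_of_mem _ q.start_mem_support)
      exact (ih hf hp.of_cons hu').trans (hf _ _ hadj.symm hparent)

end Ancestor

namespace HierDecomp

variable {α ι : Type*} {dep : ι → Finset α} {E : Finset ι} (D : HierDecomp dep E)

instance : Finite D.τ := @Finite.of_fintype _ D.fin

instance : Preorder D.τ := ancestorPreorder D.T D.root

lemma isChain_Iic (v : D.τ) : IsChain (· ≤ ·) (Set.Iic v) :=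
  fun _ hu _ hw _ => IsAncestor.total D.tree hu hw

lemma monotone_χ : Monotone D.χ :=
  fun _ _ huv => IsAncestor.apply_le_apply D.tree D.parentMono huv

lemma induce_setOf_mem_χ_connected {e : ι} (he : e ∈ E) :
    (D.T.induce {v | e ∈ D.χ v}).Connected := by
  obtain ⟨u, hu⟩ := D.cover e he
  refine (SimpleGraph.connected_iff_exists_forall_reachable _).2 ⟨⟨u, hu⟩, fun v => ?_⟩
  obtain ⟨p, hp⟩ := D.tree.connected.exists_isPath u v
  exact ⟨p.induce _ (D.pathconn e u v hu v.2 p hp)⟩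

lemma exists_mem_χ_iff_le {e : ι} (he : e ∈ E) : ∃ t, ∀ v, e ∈ D.χ v ↔ t ≤ v := by
  obtain ⟨t, ht, hle⟩ := exists_isLeast_of_induce_connected D.isChain_Iic
    (fun _ _ => isAncestor_or_isAncestor_of_adj D.tree) (Set.toFinite _)
    (D.induce_setOf_mem_χ_connected he)
  exact ⟨t, fun v => ⟨fun hv => hle hv, fun htv => D.monotone_χ htv ht⟩⟩

lemma card_χ_le_width (v : D.τ) : (D.χ v).card ≤ D.width :=
  letI := D.fin
  Finset.le_sup (f := fun v => (D.χ v).card) (Finset.mem_univ v)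

end HierDecomp

/-- For every hypergraph `G` and every hierarchy decomposition `T` of `G`, the width of `T`
is at least the hierarchy width of `G`. -/
theorem stmt16 {α ι : Type*} [DecidableEq ι] (dep : ι → Finset α) (E : Finset ι)
    (D : HierDecomp dep E) : hw dep E ≤ D.width := by
  classical
  have : Nonempty D.τ := ⟨D.root⟩
  choose! top htop using fun e (he : e ∈ E) => D.exists_mem_χ_iff_le he
  refine hw_le_of_forall_card_filter_le D.isChain_Iic (t := top) ?comparable fun v => ?count
  case comparable =>
    intro e he f hf hef
    obtain ⟨v, hev, hfv⟩ := D.meet e he f hf hef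
    exact (D.isChain_Iic v).total ((htop e he v).1 hev) ((htop f hf v).1 hfv)
  case count =>
    have hsub : E.filter (top · ≤ v) ⊆ D.χ v := fun e he =>
      have ⟨heE, hev⟩ := Finset.mem_filter.1 he
      (htop e heE v).2 hev
    exact (Finset.card_le_card hsub).trans (D.card_χ_le_width v)
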